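/- (Uniform resolvent bound on the imaginary axis) There exists a constant C > 0, depending only on L, η, β, κ, τ, m, δ and p, such that for every λ ∈ ℝ, every solution (u, w, θ, q) of the resolvent system with data (f₁, f₂, f₃, f₄) which additionally satisfies ∫₀ᴸ θ(x) dx = 0 obeys ‖U‖ ≤ C ‖F‖. -/

import Mathlib

open MeasureTheory Set intervalIntegral Complex

noncomputable section

/-- A (smooth) solution of the resolvent system `(iλ − 𝒜)U = F` with clamped/zero-flux
boundary conditions: the four ODEs on `(0, L)` together with
`u(0) = u(L) = 0`, `w(0) = w(L) = 0`, `q(0) = q(L) = 0`. -/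
def ResolventSol (L η β κ τ : ℝ) (m δ p : ℝ → ℝ) (lam : ℝ)
    (f₁ f₂ f₃ f₄ u w θ q : ℝ → ℂ) : Prop :=
  ContDiff ℝ (⊤ : ℕ∞) u ∧ ContDiff ℝ (⊤ : ℕ∞) w ∧ ContDiff ℝ (⊤ : ℕ∞) θ ∧ ContDiff ℝ (⊤ : ℕ∞) q ∧
  ContDiff ℝ (⊤ : ℕ∞) f₁ ∧ ContDiff ℝ (⊤ : ℕ∞) f₂ ∧ ContDiff ℝ (⊤ : ℕ∞) f₃ ∧ ContDiff ℝ (⊤ : ℕ∞) f₄ ∧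
  (∀ x ∈ Ioo (0 : ℝ) L,
    (Complex.I * (lam : ℂ) * u x - w x = f₁ x) ∧
    (Complex.I * (lam : ℂ) * (m x : ℂ) * w x
        - deriv (fun y => (p y : ℂ) * deriv u y + 2 * (δ y : ℂ) * deriv w y) x
        + (η : ℂ) * deriv θ x = (m x : ℂ) * f₂ x) ∧
    (Complex.I * (lam : ℂ) * θ x
        + deriv (fun y => (κ : ℂ) * q y + (η : ℂ) * w y) x = f₃ x) ∧
    (Complex.I * (lam : ℂ) * (τ : ℂ) * q x + (κ : ℂ) * deriv θ x + (β : ℂ) * q x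
        = (τ : ℂ) * f₄ x)) ∧
  u 0 = 0 ∧ u L = 0 ∧ w 0 = 0 ∧ w L = 0 ∧ q 0 = 0 ∧ q L = 0

/-- Squared phase-space norm of `U = (u, w, θ, q)`. -/
def normUsq (L τ : ℝ) (m p : ℝ → ℝ) (u w θ q : ℝ → ℂ) : ℝ :=
  (∫ x in (0 : ℝ)..L, p x * ‖deriv u x‖ ^ 2) + (∫ x in (0 : ℝ)..L, m x * ‖w x‖ ^ 2)
    + (∫ x in (0 : ℝ)..L, ‖θ x‖ ^ 2) + τ * ∫ x in (0 : ℝ)..L, ‖q x‖ ^ 2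

/-- Squared phase-space norm of the data `F = (f₁, f₂, f₃, f₄)`. -/
def normFsq (L τ : ℝ) (m p : ℝ → ℝ) (f₁ f₂ f₃ f₄ : ℝ → ℂ) : ℝ :=
  (∫ x in (0 : ℝ)..L, p x * ‖deriv f₁ x‖ ^ 2) + (∫ x in (0 : ℝ)..L, m x * ‖f₂ x‖ ^ 2)
    + (∫ x in (0 : ℝ)..L, ‖f₃ x‖ ^ 2) + τ * ∫ x in (0 : ℝ)..L, ‖f₄ x‖ ^ 2

/-!
Testing the resolvent system with `U` itself bounds the dissipation `2 ∫ δ|w'|² + β ∫ |q|²` by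
`‖U‖ ‖F‖`, because multiplication by `iλ` is skew for the real inner product. Put
`N² = dissipation + ‖F‖²`. The components `w` and `q` are `O(N)` by Poincaré's inequality and by
comparison of weights.

The temperature has mean zero, so it has a primitive `Q` vanishing at both ends; testing the flux
equation with `Q` gives `κ ‖θ‖²` up to terms `O(‖θ‖ N + N²)`. The only term carrying `λ` is
`τ ⟨Q, iλq⟩ = -τ ⟨iλQ, q⟩`, and `iλQ + κq + ηw` is a primitive of `f₃` vanishing at `0`, hence
`O(‖F‖)` uniformly in `λ`. Testing the momentum equation with `u`, and replacing `iλu` by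
`w + f₁`, gives the same kind of bound for `u'`. So `‖U‖² ≤ K N² ≤ K (‖U‖ ‖F‖ + ‖F‖²)`, and
`‖U‖` is absorbed.
-/

section L2

variable {E : Type*} [NormedAddCommGroup E] [InnerProductSpace ℝ E]
variable {a b : ℝ} {ρ σ : ℝ → ℝ} {f g h : ℝ → E}

/-- The real inner product of `L²(a, b)` with weight `ρ`. The values lie in a real inner product
space; for `ℂ`-valued functions the integrand is `ρ Re (conj f * g)`. -/
def l2Inner (a b : ℝ) (ρ : ℝ → ℝ) (f g : ℝ → E) : ℝ := ∫ x in a..b, ρ x * inner ℝ (f x) (g x)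

/-- The norm of `L²(a, b)` with weight `ρ`. -/
def l2Norm (a b : ℝ) (ρ : ℝ → ℝ) (f : ℝ → E) : ℝ := √(l2Inner a b ρ f f)

lemma l2Norm_nonneg : 0 ≤ l2Norm a b ρ f := Real.sqrt_nonneg _

lemma l2Inner_comm : l2Inner a b ρ f g = l2Inner a b ρ g f := by
  simp only [l2Inner, real_inner_comm]

lemma l2Inner_self : l2Inner a b ρ f f = ∫ x in a..b, ρ x * ‖f x‖ ^ 2 := by
  simp only [l2Inner, real_inner_self_eq_norm_sq]

lemma l2Inner_const (c : ℝ) : l2Inner a b (fun _ ↦ c) f g = c * l2Inner a b 1 f g := by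
  simp [l2Inner]

lemma l2Inner_smul_right (c : ℝ) : l2Inner a b ρ f (c • g) = c * l2Inner a b ρ f g := by
  simp only [l2Inner, Pi.smul_apply, inner_smul_right, ← intervalIntegral.integral_const_mul,
    mul_left_comm]

lemma l2Inner_congr_right (hab : a ≤ b) (hgh : EqOn g h (Ioo a b)) :
    l2Inner a b ρ f g = l2Inner a b ρ f h :=
  integral_congr_Ioo_of_le hab fun x hx ↦ by simp only [hgh hx]

lemma l2Norm_congr (hab : a ≤ b) (hfg : EqOn f g (Ioo a b)) : l2Norm a b ρ f = l2Norm a b ρ g := by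
  rw [l2Norm, l2Norm, l2Inner_congr_right hab hfg, l2Inner_comm, l2Inner_congr_right hab hfg]

lemma l2Inner_self_nonneg (hab : a ≤ b) (hρ : ∀ x ∈ Icc a b, 0 ≤ ρ x) :
    0 ≤ l2Inner a b ρ f f :=
  integral_nonneg hab fun x hx ↦ mul_nonneg (hρ x hx) real_inner_self_nonneg

lemma l2Norm_sq (hab : a ≤ b) (hρ : ∀ x ∈ Icc a b, 0 ≤ ρ x) :
    l2Norm a b ρ f ^ 2 = l2Inner a b ρ f f :=
  Real.sq_sqrt (l2Inner_self_nonneg hab hρ)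

section ContinuousOn

variable (hab : a ≤ b) (hρ : ContinuousOn ρ (Icc a b)) (hf : ContinuousOn f (Icc a b))
  (hg : ContinuousOn g (Icc a b))
include hab hρ hf hg

lemma intervalIntegrable_mul_inner :
    IntervalIntegrable (fun x ↦ ρ x * inner ℝ (f x) (g x)) volume a b :=
  (hρ.mul (hf.inner hg)).intervalIntegrable_of_Icc hab

lemma l2Inner_add_right (hh : ContinuousOn h (Icc a b)) :
    l2Inner a b ρ f (g + h) = l2Inner a b ρ f g + l2Inner a b ρ f h := by
  simp only [l2Inner, Pi.add_apply, inner_add_right, mul_add]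
  exact integral_add (intervalIntegrable_mul_inner hab hρ hf hg)
    (intervalIntegrable_mul_inner hab hρ hf hh)

lemma l2Inner_sub_right (hh : ContinuousOn h (Icc a b)) :
    l2Inner a b ρ f (g - h) = l2Inner a b ρ f g - l2Inner a b ρ f h := by
  simp only [l2Inner, Pi.sub_apply, inner_sub_right, mul_sub]
  exact integral_sub (intervalIntegrable_mul_inner hab hρ hf hg)
    (intervalIntegrable_mul_inner hab hρ hf hh)

lemma abs_l2Inner_le (hρ₀ : ∀ x ∈ Icc a b, 0 ≤ ρ x) :
    |l2Inner a b ρ f g| ≤ l2Norm a b ρ f * l2Norm a b ρ g := by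
  have hquad (t : ℝ) : 0 ≤ l2Inner a b ρ f f * (t * t) + 2 * l2Inner a b ρ f g * t
      + l2Inner a b ρ g g := by
    have hexpand : l2Inner a b ρ (t • f + g) (t • f + g) = l2Inner a b ρ f f * (t * t)
        + 2 * l2Inner a b ρ f g * t + l2Inner a b ρ g g := by
      have htf : ContinuousOn (t • f) (Icc a b) := hf.const_smul t
      rw [l2Inner_add_right hab hρ (htf.add hg) htf hg, l2Inner_smul_right,
        l2Inner_comm (g := f), l2Inner_comm (g := g), l2Inner_add_right hab hρ hf htf hg,
        l2Inner_add_right hab hρ hg htf hg, l2Inner_smul_right, l2Inner_smul_right,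
        l2Inner_comm (f := g) (g := f)]
      ring
    exact hexpand ▸ l2Inner_self_nonneg hab hρ₀
  have hdiscrim := discrim_le_zero hquad
  rw [l2Norm, l2Norm, ← Real.sqrt_mul (l2Inner_self_nonneg hab hρ₀)]
  refine Real.abs_le_sqrt ?_
  rw [discrim] at hdiscrim
  linarith

end ContinuousOn

lemma exists_l2Norm_le_mul_l2Norm (hab : a ≤ b) (hρ : ContinuousOn ρ (Icc a b))
    (hσ : ContinuousOn σ (Icc a b)) (hσ₀ : ∀ x ∈ Icc a b, 0 < σ x) :
    ∃ C ≥ 0, ∀ f : ℝ → E, ContinuousOn f (Icc a b) → l2Norm a b ρ f ≤ C * l2Norm a b σ f := by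
  obtain ⟨K, hK⟩ := isCompact_Icc.exists_bound_of_continuousOn
    (hρ.div hσ fun x hx ↦ (hσ₀ x hx).ne')
  have hK₀ : 0 ≤ K := (norm_nonneg _).trans (hK a (left_mem_Icc.2 hab))
  have hρσ : ∀ x ∈ Icc a b, ρ x ≤ K * σ x := fun x hx ↦
    (div_le_iff₀ (hσ₀ x hx)).1 ((le_abs_self _).trans (hK x hx))
  refine ⟨√K, Real.sqrt_nonneg K, fun f hf ↦ ?_⟩
  rw [l2Norm, l2Norm, ← Real.sqrt_mul hK₀, l2Inner, l2Inner,
    ← intervalIntegral.integral_const_mul]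
  refine Real.sqrt_le_sqrt (integral_mono_on hab (intervalIntegrable_mul_inner hab hρ hf hf)
    ((intervalIntegrable_mul_inner hab hσ hf hf).const_mul K) fun x hx ↦ ?_)
  rw [← mul_assoc]
  exact mul_le_mul_of_nonneg_right (hρσ x hx) real_inner_self_nonneg

lemma sq_integral_norm_le {F : Type*} [NormedAddCommGroup F] {f : ℝ → F} (hab : a ≤ b)
    (hf : ContinuousOn f (Icc a b)) :
    (∫ x in a..b, ‖f x‖) ^ 2 ≤ (b - a) * ∫ x in a..b, ‖f x‖ ^ 2 := by
  have hone : ∀ x ∈ Icc a b, (0 : ℝ) ≤ (1 : ℝ → ℝ) x := fun _ _ ↦ zero_le_one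
  have hcs := abs_l2Inner_le (ρ := 1) hab continuousOn_const
    (continuousOn_const (c := (1 : ℝ))) hf.norm hone
  have hsq := pow_le_pow_left₀ (abs_nonneg _) hcs 2
  rw [sq_abs, mul_pow, l2Norm_sq hab hone, l2Norm_sq hab hone] at hsq
  simpa [l2Inner, ← sq] using hsq

lemma poincare_integral_norm_sq_le {F : Type*} [NormedAddCommGroup F] [NormedSpace ℝ F]
    [CompleteSpace F] {f : ℝ → F} (hab : a ≤ b) (hf : ContDiff ℝ 1 f) (hfa : f a = 0) :
    ∫ x in a..b, ‖f x‖ ^ 2 ≤ (b - a) ^ 2 * ∫ x in a..b, ‖deriv f x‖ ^ 2 := by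
  have hf' := hf.continuous_deriv_one
  have hpointwise : ∀ x ∈ Icc a b, ‖f x‖ ^ 2 ≤ (b - a) * ∫ y in a..b, ‖deriv f y‖ ^ 2 := by
    intro x hx
    have hle : ‖f x‖ ≤ ∫ y in a..b, ‖deriv f y‖ := calc
      ‖f x‖ = ‖∫ y in a..x, deriv f y‖ := by
        rw [integral_deriv_of_contDiffOn_Icc hf.contDiffOn hx.1, hfa, sub_zero]
      _ ≤ ∫ y in a..x, ‖deriv f y‖ := norm_integral_le_integral_norm hx.1
      _ ≤ ∫ y in a..b, ‖deriv f y‖ := integral_mono_interval le_rfl hx.1 hx.2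
        (.of_forall fun _ ↦ norm_nonneg _) (hf'.norm.intervalIntegrable _ _)
    exact (pow_le_pow_left₀ (norm_nonneg _) hle 2).trans
      (sq_integral_norm_le hab hf'.continuousOn)
  calc ∫ x in a..b, ‖f x‖ ^ 2
      ≤ ∫ _ in a..b, (b - a) * ∫ y in a..b, ‖deriv f y‖ ^ 2 :=
        integral_mono_on hab ((hf.continuous.norm.pow 2).intervalIntegrable _ _)
          (continuous_const.intervalIntegrable _ _) hpointwise
    _ = (b - a) ^ 2 * ∫ x in a..b, ‖deriv f x‖ ^ 2 := by
        rw [intervalIntegral.integral_const, smul_eq_mul, sq, mul_assoc]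

lemma exists_l2Norm_le_mul_l2Norm_deriv [CompleteSpace E] (hab : a ≤ b)
    (hρ : ContinuousOn ρ (Icc a b)) (hσ : ContinuousOn σ (Icc a b))
    (hσ₀ : ∀ x ∈ Icc a b, 0 < σ x) :
    ∃ C ≥ 0, ∀ f : ℝ → E, ContDiff ℝ 1 f → f a = 0 →
      l2Norm a b ρ f ≤ C * l2Norm a b σ (deriv f) := by
  obtain ⟨c, hc, hρc⟩ := exists_l2Norm_le_mul_l2Norm (E := E) (σ := 1) hab hρ continuousOn_const
    fun _ _ ↦ zero_lt_one
  obtain ⟨d, hd, hσd⟩ := exists_l2Norm_le_mul_l2Norm (E := E) (ρ := 1) hab continuousOn_const hσ hσ₀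
  have hba := sub_nonneg.2 hab
  refine ⟨c * ((b - a) * d), by positivity, fun f hf hfa ↦ ?_⟩
  have hpoincare : l2Norm a b 1 f ≤ (b - a) * l2Norm a b 1 (deriv f) := by
    rw [l2Norm, l2Norm, ← Real.sqrt_sq hba, ← Real.sqrt_mul (sq_nonneg _), l2Inner_self,
      l2Inner_self]
    simpa using Real.sqrt_le_sqrt (poincare_integral_norm_sq_le hab hf hfa)
  calc l2Norm a b ρ f ≤ c * l2Norm a b 1 f := hρc f hf.continuous.continuousOn
    _ ≤ c * ((b - a) * l2Norm a b 1 (deriv f)) := by gcongr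
    _ ≤ c * ((b - a) * (d * l2Norm a b σ (deriv f))) := by
        gcongr
        exact hσd _ hf.continuous_deriv_one.continuousOn
    _ = c * ((b - a) * d) * l2Norm a b σ (deriv f) := by ring

lemma exists_contDiff_deriv_eq [CompleteSpace E] (hf : Continuous f) (hfab : ∫ x in a..b, f x = 0) :
    ∃ F : ℝ → E, ContDiff ℝ 1 F ∧ deriv F = f ∧ F a = 0 ∧ F b = 0 := by
  have hderiv : deriv (fun x ↦ ∫ t in a..x, f t) = f := funext (hf.deriv_integral f a)
  exact ⟨fun x ↦ ∫ t in a..x, f t, contDiff_one_iff_deriv.2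
    ⟨fun x ↦ (hf.integral_hasStrictDerivAt a x).hasDerivAt.differentiableAt, by rwa [hderiv]⟩,
    hderiv, integral_same, hfab⟩

lemma integral_inner_deriv_add_eq_zero
    (hfg : AbsolutelyContinuousOnInterval (fun x ↦ inner ℝ (f x) (g x)) a b)
    (hf : ∀ᵐ x, x ∈ uIcc a b → DifferentiableAt ℝ f x) (hg : Differentiable ℝ g)
    (hga : g a = 0) (hgb : g b = 0) :
    ∫ x in a..b, (inner ℝ (f x) (deriv g x) + inner ℝ (deriv f x) (g x)) = 0 := calc
  _ = ∫ x in a..b, deriv (fun x ↦ inner ℝ (f x) (g x)) x := by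
    refine integral_congr_ae (hf.mono fun x hx hxab ↦ ?_)
    exact ((hx (uIoc_subset_uIcc hxab)).hasDerivAt.inner ℝ (hg x).hasDerivAt).deriv.symm
  _ = 0 := by simp [hfg.integral_deriv_eq_sub, hga, hgb]

lemma l2Inner_one_deriv_left (hf : ContDiff ℝ 1 f) (hg : ContDiff ℝ 1 g)
    (hga : g a = 0) (hgb : g b = 0) :
    l2Inner a b 1 (deriv f) g = -l2Inner a b 1 f (deriv g) := by
  have hparts := integral_inner_deriv_add_eq_zero
    (hf.inner ℝ hg).contDiffOn.absolutelyContinuousOnInterval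
    (.of_forall fun x _ ↦ hf.differentiable one_ne_zero x) (hg.differentiable one_ne_zero) hga hgb
  have hf' := hf.continuous_deriv_one
  have hg' := hg.continuous_deriv_one
  rw [integral_add ((hf.continuous.inner hg').intervalIntegrable _ _)
    ((hf'.inner hg.continuous).intervalIntegrable _ _)] at hparts
  simp only [l2Inner, Pi.one_apply, one_mul]
  linarith

lemma l2Inner_I_smul_left {lam : ℝ} {f g : ℝ → ℂ} :
    l2Inner a b ρ ((I * lam) • f) g = -l2Inner a b ρ f ((I * lam) • g) := by
  rw [l2Inner, l2Inner, ← intervalIntegral.integral_neg]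
  congr! 2 with x
  simp only [Pi.smul_apply, smul_eq_mul, Complex.inner, map_mul, conj_I, conj_ofReal, ← mul_neg,
    ← neg_re]
  ring_nf

lemma l2Inner_I_smul_self {lam : ℝ} {f : ℝ → ℂ} : l2Inner a b ρ f ((I * lam) • f) = 0 := by
  linarith [l2Inner_I_smul_left (a := a) (b := b) (ρ := ρ) (lam := lam) (f := f) (g := f),
    l2Inner_comm (a := a) (b := b) (ρ := ρ) (f := f) (g := (I * (lam : ℂ)) • f)]

end L2

lemma exists_pos_le_mul_of_mul_sq_le {k a b : ℝ} (hk : 0 < k) (ha : 0 ≤ a) (hb : 0 ≤ b) :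
    ∃ C > 0, ∀ x y : ℝ, 0 ≤ y → k * x ^ 2 ≤ a * x * y + b * y ^ 2 → x ≤ C * y := by
  refine ⟨(a + b) / k + 1, by positivity, fun x y hy h ↦ ?_⟩
  rcases le_or_gt x y with hxy | hyx
  · calc x ≤ y := hxy
      _ ≤ ((a + b) / k + 1) * y := le_mul_of_one_le_left hy (le_add_of_nonneg_left (by positivity))
  · have hx : 0 < x := hy.trans_lt hyx
    have hkx : k * x ≤ (a + b) * y :=
      le_of_mul_le_mul_left (by nlinarith [mul_nonneg hb hy]) hx
    calc x ≤ (a + b) * y / k := (le_div_iff₀' hk).2 hkx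
      _ = (a + b) / k * y := by ring
      _ ≤ ((a + b) / k + 1) * y := by linarith

section Stress

variable {a b : ℝ} {p δ : ℝ → ℝ} {u w φ : ℝ → ℂ}

/-- The total stress `p u' + 2 δ w'`, elastic plus viscous. -/
def stress (p δ : ℝ → ℝ) (u w : ℝ → ℂ) : ℝ → ℂ :=
  fun y ↦ (p y : ℂ) * deriv u y + 2 * (δ y : ℂ) * deriv w y

lemma inner_stress (x : ℝ) (z : ℂ) :
    inner ℝ (stress p δ u w x) z
      = p x * inner ℝ (deriv u x) z + 2 * (δ x * inner ℝ (deriv w x) z) := by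
  have hsmul : stress p δ u w x = p x • deriv u x + (2 : ℝ) • δ x • deriv w x := by
    simp [stress, mul_assoc]
  rw [hsmul, inner_add_left, real_inner_smul_left, real_inner_smul_left, real_inner_smul_left]

lemma ae_differentiableAt_stress (hp : AbsolutelyContinuousOnInterval p a b)
    (hδ : AbsolutelyContinuousOnInterval δ a b) (hu : Differentiable ℝ (deriv u))
    (hw : Differentiable ℝ (deriv w)) :
    ∀ᵐ x, x ∈ uIcc a b → DifferentiableAt ℝ (stress p δ u w) x := by
  filter_upwards [hp.ae_differentiableAt, hδ.ae_differentiableAt] with x hpx hδx hx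
  have hpx' := (hpx hx).hasDerivAt.ofReal_comp.differentiableAt
  have hδx' := (hδx hx).hasDerivAt.ofReal_comp.differentiableAt
  exact (hpx'.mul (hu x)).add ((hδx'.const_mul 2).mul (hw x))

lemma absolutelyContinuousOnInterval_inner_stress (hp : AbsolutelyContinuousOnInterval p a b)
    (hδ : AbsolutelyContinuousOnInterval δ a b) (hu : ContDiff ℝ 1 (deriv u))
    (hw : ContDiff ℝ 1 (deriv w)) (hφ : ContDiff ℝ 1 φ) :
    AbsolutelyContinuousOnInterval (fun x ↦ inner ℝ (stress p δ u w x) (φ x)) a b := by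
  have hinner {v : ℝ → ℂ} (hv : ContDiff ℝ 1 v) :
      AbsolutelyContinuousOnInterval (fun x ↦ inner ℝ (v x) (φ x)) a b :=
    (hv.inner ℝ hφ).contDiffOn.absolutelyContinuousOnInterval
  simp only [inner_stress]
  exact (hp.fun_mul (hinner hu)).fun_add ((hδ.fun_mul (hinner hw)).const_mul 2)

end Stress

/-- The energy dissipated by the viscous damping and the heat flux. -/
def dissipation (L β : ℝ) (δ : ℝ → ℝ) (w q : ℝ → ℂ) : ℝ :=
  2 * l2Inner 0 L δ (deriv w) (deriv w) + l2Inner 0 L (fun _ ↦ β) q q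

/-- The square root of the dissipation plus the squared norm of the data; every component of the
energy of a solution is estimated by a multiple of it. -/
def controlNorm (L β τ : ℝ) (m δ p : ℝ → ℝ) (w q f₁ f₂ f₃ f₄ : ℝ → ℂ) : ℝ :=
  √(dissipation L β δ w q + normFsq L τ m p f₁ f₂ f₃ f₄)

/-- The primitive `iλQ + κq + ηw` of `f₃`, for `Q` a primitive of the temperature `θ`. -/
def fluxPotential (η κ lam : ℝ) (w q Q : ℝ → ℂ) : ℝ → ℂ := (I * lam) • Q + (κ • q + η • w)

section EnergyNorm

variable {L β τ : ℝ} {m δ p : ℝ → ℝ} {f₁ f₂ f₃ f₄ u w θ q : ℝ → ℂ}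

lemma normUsq_eq_l2Inner : normUsq L τ m p u w θ q = l2Inner 0 L p (deriv u) (deriv u)
    + l2Inner 0 L m w w + l2Inner 0 L 1 θ θ + l2Inner 0 L (fun _ ↦ τ) q q := by
  simp [normUsq, l2Inner_self]

lemma normFsq_eq_normUsq : normFsq L τ m p f₁ f₂ f₃ f₄ = normUsq L τ m p f₁ f₂ f₃ f₄ := rfl

variable (hL : 0 ≤ L) (hτ : 0 ≤ τ) (hm : ∀ x ∈ Icc 0 L, 0 ≤ m x) (hp : ∀ x ∈ Icc 0 L, 0 ≤ p x)
include hL hτ hm hp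

lemma normUsq_eq_l2Norm_sq : normUsq L τ m p u w θ q = l2Norm 0 L p (deriv u) ^ 2
    + l2Norm 0 L m w ^ 2 + l2Norm 0 L 1 θ ^ 2 + l2Norm 0 L (fun _ ↦ τ) q ^ 2 := by
  rw [normUsq_eq_l2Inner, l2Norm_sq hL hp, l2Norm_sq hL hm,
    l2Norm_sq (ρ := 1) hL fun _ _ ↦ zero_le_one, l2Norm_sq hL fun _ _ ↦ hτ]

lemma normUsq_nonneg : 0 ≤ normUsq L τ m p u w θ q := by
  rw [normUsq_eq_l2Norm_sq hL hτ hm hp]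
  positivity

variable (hβ : 0 ≤ β) (hδ : ∀ x ∈ Icc 0 L, 0 ≤ δ x)
include hβ hδ

lemma controlNorm_sq : controlNorm L β τ m δ p w q f₁ f₂ f₃ f₄ ^ 2
    = dissipation L β δ w q + normFsq L τ m p f₁ f₂ f₃ f₄ := by
  have hw : 0 ≤ l2Inner 0 L δ (deriv w) (deriv w) := l2Inner_self_nonneg hL hδ
  have hq : 0 ≤ l2Inner 0 L (fun _ ↦ β) q q := l2Inner_self_nonneg hL fun _ _ ↦ hβ
  have hF := normUsq_nonneg (u := f₁) (w := f₂) (θ := f₃) (q := f₄) hL hτ hm hp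
  exact Real.sq_sqrt (add_nonneg (by rw [dissipation]; positivity) hF)

lemma l2Norm_le_controlNorm :
    l2Norm 0 L δ (deriv w) ≤ controlNorm L β τ m δ p w q f₁ f₂ f₃ f₄ ∧
    l2Norm 0 L (fun _ ↦ β) q ≤ controlNorm L β τ m δ p w q f₁ f₂ f₃ f₄ ∧
    l2Norm 0 L p (deriv f₁) ≤ controlNorm L β τ m δ p w q f₁ f₂ f₃ f₄ ∧
    l2Norm 0 L m f₂ ≤ controlNorm L β τ m δ p w q f₁ f₂ f₃ f₄ ∧
    l2Norm 0 L 1 f₃ ≤ controlNorm L β τ m δ p w q f₁ f₂ f₃ f₄ ∧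
    l2Norm 0 L (fun _ ↦ τ) f₄ ≤ controlNorm L β τ m δ p w q f₁ f₂ f₃ f₄ := by
  have hw : 0 ≤ l2Inner 0 L δ (deriv w) (deriv w) := l2Inner_self_nonneg hL hδ
  have hq : 0 ≤ l2Inner 0 L (fun _ ↦ β) q q := l2Inner_self_nonneg hL fun _ _ ↦ hβ
  have hf₁ : 0 ≤ l2Inner 0 L p (deriv f₁) (deriv f₁) := l2Inner_self_nonneg hL hp
  have hf₂ : 0 ≤ l2Inner 0 L m f₂ f₂ := l2Inner_self_nonneg hL hm
  have hf₃ : 0 ≤ l2Inner 0 L 1 f₃ f₃ := l2Inner_self_nonneg hL fun _ _ ↦ zero_le_one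
  have hf₄ : 0 ≤ l2Inner 0 L (fun _ ↦ τ) f₄ f₄ := l2Inner_self_nonneg hL fun _ _ ↦ hτ
  refine ⟨?_, ?_, ?_, ?_, ?_, ?_⟩ <;> refine Real.sqrt_le_sqrt ?_ <;>
    rw [dissipation, normFsq_eq_normUsq, normUsq_eq_l2Inner] <;> linarith

end EnergyNorm

namespace ResolventSol

variable {L η β κ τ lam : ℝ} {m δ p : ℝ → ℝ} {f₁ f₂ f₃ f₄ u w θ q Q : ℝ → ℂ}

section Equations

variable (h : ResolventSol L η β κ τ m δ p lam f₁ f₂ f₃ f₄ u w θ q)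
include h

lemma contDiff_one : ContDiff ℝ 1 u ∧ ContDiff ℝ 1 w ∧ ContDiff ℝ 1 θ ∧ ContDiff ℝ 1 q ∧
    ContDiff ℝ 1 f₁ ∧ ContDiff ℝ 1 f₂ ∧ ContDiff ℝ 1 f₃ ∧ ContDiff ℝ 1 f₄ := by
  obtain ⟨hu, hw, hθ, hq, hf₁, hf₂, hf₃, hf₄, -⟩ := h
  exact ⟨hu.of_le (by simp), hw.of_le (by simp), hθ.of_le (by simp), hq.of_le (by simp),
    hf₁.of_le (by simp), hf₂.of_le (by simp), hf₃.of_le (by simp), hf₄.of_le (by simp)⟩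

lemma contDiff_one_deriv : ContDiff ℝ 1 (deriv u) ∧ ContDiff ℝ 1 (deriv w) :=
  ⟨(contDiff_infty_iff_deriv.1 h.1).2.of_le (by simp),
    (contDiff_infty_iff_deriv.1 h.2.1).2.of_le (by simp)⟩

lemma boundary_eq_zero : u 0 = 0 ∧ u L = 0 ∧ w 0 = 0 ∧ w L = 0 ∧ q 0 = 0 ∧ q L = 0 :=
  h.2.2.2.2.2.2.2.2.2

lemma equations {x : ℝ} (hx : x ∈ Ioo 0 L) :
    (I * lam * u x - w x = f₁ x) ∧
    (I * lam * m x * w x - deriv (stress p δ u w) x + η * deriv θ x = m x * f₂ x) ∧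
    (I * lam * θ x + deriv (fun y ↦ κ * q y + η * w y) x = f₃ x) ∧
    (I * lam * τ * q x + κ * deriv θ x + β * q x = τ * f₄ x) :=
  h.2.2.2.2.2.2.2.2.1 x hx

lemma eqOn_f₁ : EqOn f₁ ((I * lam) • u - w) (Ioo 0 L) := fun _ hx ↦ (h.equations hx).1.symm

lemma eqOn_deriv_f₁ : EqOn (deriv f₁) ((I * lam) • deriv u - deriv w) (Ioo 0 L) := by
  obtain ⟨hu, hw, -⟩ := h.contDiff_one
  intro x hx
  have hux := hu.differentiable one_ne_zero x
  have hwx := hw.differentiable one_ne_zero x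
  rw [(h.eqOn_f₁.eventuallyEq_of_mem (isOpen_Ioo.mem_nhds hx)).deriv_eq,
    deriv_sub (hux.const_smul _) hwx, deriv_const_smul _ hux]
  rfl

lemma f₁_zero (hL : 0 < L) : f₁ 0 = 0 := by
  obtain ⟨hu, hw, -, -, hf₁, -⟩ := h.contDiff_one
  obtain ⟨hu₀, -, hw₀, -⟩ := h.boundary_eq_zero
  have hclosure := h.eqOn_f₁.closure hf₁.continuous
    ((hu.continuous.const_smul _).sub hw.continuous)
  rw [closure_Ioo hL.ne] at hclosure
  simp [hclosure (left_mem_Icc.2 hL.le), hu₀, hw₀]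

lemma eqOn_f₃ : EqOn f₃ ((I * lam) • θ + (κ • deriv q + η • deriv w)) (Ioo 0 L) := by
  obtain ⟨-, hw, -, hq, -⟩ := h.contDiff_one
  intro x hx
  have hwx := hw.differentiable one_ne_zero x
  have hqx := hq.differentiable one_ne_zero x
  rw [← (h.equations hx).2.2.1, deriv_fun_add (hqx.const_mul _) (hwx.const_mul _),
    deriv_const_mul _ hqx, deriv_const_mul _ hwx]
  simp

lemma eqOn_f₄ : EqOn (τ • f₄) (τ • (I * lam) • q + (κ • deriv θ + β • q)) (Ioo 0 L) := by
  intro x hx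
  simp only [Pi.smul_apply, Pi.add_apply, smul_eq_mul, real_smul]
  linear_combination -(h.equations hx).2.2.2

lemma inner_deriv_stress {x : ℝ} (hx : x ∈ Ioo 0 L) (z : ℂ) :
    inner ℝ (deriv (stress p δ u w) x) z = m x * inner ℝ (((I * lam) • w) x) z
      + η * inner ℝ (deriv θ x) z - m x * inner ℝ (f₂ x) z := by
  have hmomentum : deriv (stress p δ u w) x
      = m x • ((I * lam) • w) x + η • deriv θ x - m x • f₂ x := by
    simp only [Pi.smul_apply, smul_eq_mul, real_smul]
    linear_combination -(h.equations hx).2.1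
  rw [hmomentum, inner_sub_left, inner_add_left, real_inner_smul_left, real_inner_smul_left,
    real_inner_smul_left]

lemma weak_form (hL : 0 ≤ L) (hm : ContinuousOn m (Icc 0 L))
    (hδ : AbsolutelyContinuousOnInterval δ 0 L) (hp : AbsolutelyContinuousOnInterval p 0 L)
    {φ : ℝ → ℂ} (hφ : ContDiff ℝ 1 φ) (hφ₀ : φ 0 = 0) (hφL : φ L = 0) :
    l2Inner 0 L m ((I * lam) • w) φ + η * l2Inner 0 L 1 (deriv θ) φ
      + l2Inner 0 L p (deriv u) (deriv φ) + 2 * l2Inner 0 L δ (deriv w) (deriv φ)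
      = l2Inner 0 L m f₂ φ := by
  obtain ⟨-, hw, hθ, -, -, hf₂, -⟩ := h.contDiff_one
  obtain ⟨hu', hw'⟩ := h.contDiff_one_deriv
  have hparts := integral_inner_deriv_add_eq_zero
    (absolutelyContinuousOnInterval_inner_stress hp hδ hu' hw' hφ)
    (ae_differentiableAt_stress hp hδ (hu'.differentiable one_ne_zero)
      (hw'.differentiable one_ne_zero)) (hφ.differentiable one_ne_zero) hφ₀ hφL
  rw [integral_congr_Ioo_of_le hL fun x hx ↦ by
    rw [inner_stress, h.inner_deriv_stress hx]] at hparts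
  have hint {ρ : ℝ → ℝ} (hρ : ContinuousOn ρ (Icc 0 L)) {f g : ℝ → ℂ} (hf : Continuous f)
      (hg : Continuous g) : IntervalIntegrable (fun x ↦ ρ x * inner ℝ (f x) (g x)) volume 0 L :=
    intervalIntegrable_mul_inner hL hρ hf.continuousOn hg.continuousOn
  have hφ' := hφ.continuous_deriv_one
  have hpu := hint (uIcc_of_le hL ▸ hp.continuousOn) hu'.continuous hφ'
  have hδw := (hint (uIcc_of_le hL ▸ hδ.continuousOn) hw'.continuous hφ').const_mul 2
  have hmw := hint hm (hw.continuous.const_smul (I * lam : ℂ)) hφ.continuous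
  have hηθ := hint (continuousOn_const (c := η)) hθ.continuous_deriv_one hφ.continuous
  have hmf := hint hm hf₂.continuous hφ.continuous
  rw [integral_add (hpu.add hδw) ((hmw.add hηθ).sub hmf), integral_add hpu hδw,
    integral_sub (hmw.add hηθ) hmf, integral_add hmw hηθ,
    intervalIntegral.integral_const_mul] at hparts
  rw [← l2Inner_const]
  simp only [l2Inner]
  linarith

lemma dissipation_eq_pairing (hL : 0 ≤ L) (hm : ContinuousOn m (Icc 0 L))
    (hδ : AbsolutelyContinuousOnInterval δ 0 L) (hp : AbsolutelyContinuousOnInterval p 0 L) :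
    dissipation L β δ w q = l2Inner 0 L p (deriv u) (deriv f₁) + l2Inner 0 L m w f₂
      + l2Inner 0 L 1 θ f₃ + l2Inner 0 L (fun _ ↦ τ) q f₄ := by
  obtain ⟨hu, hw, hθ, hq, -⟩ := h.contDiff_one
  obtain ⟨-, -, hw₀, hwL, hq₀, hqL⟩ := h.boundary_eq_zero
  have hp' : ContinuousOn p (Icc 0 L) := uIcc_of_le hL ▸ hp.continuousOn
  have := hw.continuous
  have := hθ.continuous
  have := hq.continuous
  have := hu.continuous_deriv_one
  have := hw.continuous_deriv_one
  have := hθ.continuous_deriv_one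
  have := hq.continuous_deriv_one
  have hmomentum := h.weak_form hL hm hδ hp hw hw₀ hwL
  rw [l2Inner_I_smul_left, l2Inner_I_smul_self] at hmomentum
  have hstrain : l2Inner 0 L p (deriv u) (deriv f₁) = -l2Inner 0 L p (deriv u) (deriv w) := by
    rw [l2Inner_congr_right hL h.eqOn_deriv_f₁]
    simp (disch := fun_prop) only [l2Inner_sub_right hL hp', l2Inner_I_smul_self, zero_sub]
  have htemperature : l2Inner 0 L 1 θ f₃
      = -(κ * l2Inner 0 L 1 (deriv θ) q + η * l2Inner 0 L 1 (deriv θ) w) := by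
    rw [l2Inner_congr_right hL h.eqOn_f₃, l2Inner_one_deriv_left hθ hq hq₀ hqL,
      l2Inner_one_deriv_left hθ hw hw₀ hwL]
    simp (disch := fun_prop) only [l2Inner_add_right (ρ := 1) hL continuousOn_const,
      l2Inner_I_smul_self, l2Inner_smul_right]
    ring
  have hflux : l2Inner 0 L (fun _ ↦ τ) q f₄
      = κ * l2Inner 0 L 1 (deriv θ) q + β * l2Inner 0 L 1 q q := by
    rw [l2Inner_const, ← l2Inner_smul_right, l2Inner_congr_right hL h.eqOn_f₄,
      l2Inner_comm (f := deriv θ)]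
    simp (disch := fun_prop) only [l2Inner_add_right (ρ := 1) hL continuousOn_const,
      l2Inner_I_smul_self, l2Inner_smul_right]
    ring
  rw [dissipation, l2Inner_const β, hstrain, htemperature, hflux, l2Inner_comm (f := w)]
  linarith

lemma strain_eq_pairing (hL : 0 ≤ L) (hm : ContinuousOn m (Icc 0 L))
    (hδ : AbsolutelyContinuousOnInterval δ 0 L) (hp : AbsolutelyContinuousOnInterval p 0 L) :
    l2Inner 0 L p (deriv u) (deriv u) = l2Inner 0 L m w w + l2Inner 0 L m w f₁
      + η * l2Inner 0 L 1 θ (deriv u) + l2Inner 0 L m f₂ u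
      - 2 * l2Inner 0 L δ (deriv w) (deriv u) := by
  obtain ⟨hu, hw, hθ, -⟩ := h.contDiff_one
  obtain ⟨hu₀, huL, -⟩ := h.boundary_eq_zero
  have := hu.continuous
  have := hw.continuous
  have hmomentum := h.weak_form hL hm hδ hp hu hu₀ huL
  have hinertia : l2Inner 0 L m ((I * lam) • w) u = -(l2Inner 0 L m w f₁ + l2Inner 0 L m w w) := by
    rw [l2Inner_I_smul_left, l2Inner_congr_right hL h.eqOn_f₁]
    simp (disch := fun_prop) only [l2Inner_sub_right hL hm]
    ring
  rw [hinertia, l2Inner_one_deriv_left hθ hu hu₀ huL] at hmomentum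
  linarith

lemma temperature_eq_pairing (hL : 0 ≤ L) (hQ : ContDiff ℝ 1 Q) (hQ' : deriv Q = θ)
    (hQ₀ : Q 0 = 0) (hQL : Q L = 0) :
    κ * l2Inner 0 L 1 θ θ = l2Inner 0 L (fun _ ↦ β) Q q - l2Inner 0 L (fun _ ↦ τ) Q f₄
      - l2Inner 0 L (fun _ ↦ τ) q (fluxPotential η κ lam w q Q) + κ * l2Inner 0 L (fun _ ↦ τ) q q
      + η * l2Inner 0 L (fun _ ↦ τ) q w := by
  obtain ⟨-, hw, hθ, hq, -⟩ := h.contDiff_one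
  have := hQ.continuous
  have := hw.continuous
  have := hq.continuous
  have := hθ.continuous_deriv_one
  have hparts : l2Inner 0 L 1 θ θ = -l2Inner 0 L 1 Q (deriv θ) := by
    rw [l2Inner_comm (f := Q), l2Inner_one_deriv_left hθ hQ hQ₀ hQL, hQ', neg_neg]
  have hflux : l2Inner 0 L (fun _ ↦ τ) Q f₄ = τ * l2Inner 0 L 1 Q ((I * lam) • q)
      + κ * l2Inner 0 L 1 Q (deriv θ) + β * l2Inner 0 L 1 Q q := by
    rw [l2Inner_const, ← l2Inner_smul_right, l2Inner_congr_right hL h.eqOn_f₄]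
    simp (disch := fun_prop) only [l2Inner_add_right (ρ := 1) hL continuousOn_const,
      l2Inner_smul_right]
    ring
  have hskew : l2Inner 0 L 1 Q ((I * lam) • q) = -(l2Inner 0 L 1 q (fluxPotential η κ lam w q Q)
      - κ * l2Inner 0 L 1 q q - η * l2Inner 0 L 1 q w) := by
    rw [fluxPotential, ← neg_eq_iff_eq_neg, ← l2Inner_I_smul_left, l2Inner_comm]
    simp (disch := fun_prop) only [l2Inner_add_right (ρ := 1) hL continuousOn_const,
      l2Inner_smul_right]
    ring
  rw [hparts, hflux, hskew, l2Inner_const β, l2Inner_const τ, l2Inner_const τ, l2Inner_const τ]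
  ring

lemma contDiff_fluxPotential (hQ : ContDiff ℝ 1 Q) :
    ContDiff ℝ 1 (fluxPotential η κ lam w q Q) := by
  obtain ⟨-, hw, -, hq, -⟩ := h.contDiff_one
  exact (hQ.const_smul (I * lam : ℂ)).add ((hq.const_smul κ).add (hw.const_smul η))

lemma fluxPotential_zero (hQ₀ : Q 0 = 0) : fluxPotential η κ lam w q Q 0 = 0 := by
  obtain ⟨-, -, hw₀, -, hq₀, -⟩ := h.boundary_eq_zero
  simp [fluxPotential, hQ₀, hw₀, hq₀]

lemma eqOn_deriv_fluxPotential (hQ : ContDiff ℝ 1 Q) (hQ' : deriv Q = θ) :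
    EqOn (deriv (fluxPotential η κ lam w q Q)) f₃ (Ioo 0 L) := by
  obtain ⟨-, hw, -, hq, -⟩ := h.contDiff_one
  intro x hx
  have hQx := hQ.differentiable one_ne_zero x
  have hwx := hw.differentiable one_ne_zero x
  have hqx := hq.differentiable one_ne_zero x
  rw [h.eqOn_f₃ hx, ← hQ']
  exact ((hQx.hasDerivAt.const_smul (I * lam : ℂ)).add
    ((hqx.hasDerivAt.const_smul κ).add (hwx.hasDerivAt.const_smul η))).deriv

end Equations

lemma dissipation_le (h : ResolventSol L η β κ τ m δ p lam f₁ f₂ f₃ f₄ u w θ q)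
    (hL : 0 ≤ L) (hτ : 0 ≤ τ) (hm : ContinuousOn m (Icc 0 L))
    (hδ : AbsolutelyContinuousOnInterval δ 0 L) (hp : AbsolutelyContinuousOnInterval p 0 L)
    (hm₀ : ∀ x ∈ Icc 0 L, 0 ≤ m x) (hp₀ : ∀ x ∈ Icc 0 L, 0 ≤ p x) :
    dissipation L β δ w q
      ≤ √(normUsq L τ m p u w θ q) * √(normFsq L τ m p f₁ f₂ f₃ f₄) := by
  obtain ⟨hu, hw, hθ, hq, hf₁, hf₂, hf₃, hf₄⟩ := h.contDiff_one
  have hstrain := le_of_abs_le <| abs_l2Inner_le hL (uIcc_of_le hL ▸ hp.continuousOn)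
    hu.continuous_deriv_one.continuousOn hf₁.continuous_deriv_one.continuousOn hp₀
  have hvelocity := le_of_abs_le <| abs_l2Inner_le hL hm hw.continuous.continuousOn
    hf₂.continuous.continuousOn hm₀
  have htemperature := le_of_abs_le <| abs_l2Inner_le (ρ := 1) hL continuousOn_const
    hθ.continuous.continuousOn hf₃.continuous.continuousOn fun _ _ ↦ zero_le_one
  have hflux := le_of_abs_le <| abs_l2Inner_le (ρ := fun _ ↦ τ) hL continuousOn_const
    hq.continuous.continuousOn hf₄.continuous.continuousOn fun _ _ ↦ hτ
  have hcauchy := Real.sum_mul_le_sqrt_mul_sqrt Finset.univ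
    ![l2Norm 0 L p (deriv u), l2Norm 0 L m w, l2Norm 0 L 1 θ, l2Norm 0 L (fun _ ↦ τ) q]
    ![l2Norm 0 L p (deriv f₁), l2Norm 0 L m f₂, l2Norm 0 L 1 f₃, l2Norm 0 L (fun _ ↦ τ) f₄]
  simp only [Fin.sum_univ_four, Matrix.cons_val] at hcauchy
  rw [h.dissipation_eq_pairing hL hm hδ hp, normFsq_eq_normUsq,
    normUsq_eq_l2Norm_sq hL hτ hm₀ hp₀, normUsq_eq_l2Norm_sq hL hτ hm₀ hp₀]
  linarith

lemma abs_mul_l2Norm_temperature_sq_le (h : ResolventSol L η β κ τ m δ p lam f₁ f₂ f₃ f₄ u w θ q)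
    (hL : 0 ≤ L) (hβ : 0 ≤ β) (hτ : 0 ≤ τ) (hQ : ContDiff ℝ 1 Q) (hQ' : deriv Q = θ)
    (hQ₀ : Q 0 = 0) (hQL : Q L = 0) :
    |κ| * l2Norm 0 L 1 θ ^ 2 ≤ l2Norm 0 L (fun _ ↦ β) Q * l2Norm 0 L (fun _ ↦ β) q
      + l2Norm 0 L (fun _ ↦ τ) Q * l2Norm 0 L (fun _ ↦ τ) f₄
      + l2Norm 0 L (fun _ ↦ τ) q * l2Norm 0 L (fun _ ↦ τ) (fluxPotential η κ lam w q Q)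
      + |κ| * l2Norm 0 L (fun _ ↦ τ) q ^ 2
      + |η| * (l2Norm 0 L (fun _ ↦ τ) q * l2Norm 0 L (fun _ ↦ τ) w) := by
  obtain ⟨-, hw, -, hq, -, -, -, hf₄⟩ := h.contDiff_one
  have hcauchy {c : ℝ} (hc : 0 ≤ c) {f g : ℝ → ℂ} (hf : ContDiff ℝ 1 f) (hg : ContDiff ℝ 1 g) :
      |l2Inner 0 L (fun _ ↦ c) f g| ≤ l2Norm 0 L (fun _ ↦ c) f * l2Norm 0 L (fun _ ↦ c) g :=
    abs_l2Inner_le hL continuousOn_const hf.continuous.continuousOn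
      hg.continuous.continuousOn fun _ _ ↦ hc
  have hQq := hcauchy hβ hQ hq
  have hQf₄ := hcauchy hτ hQ hf₄
  have hqΦ := hcauchy hτ hq (h.contDiff_fluxPotential hQ)
  have hqw := mul_le_mul_of_nonneg_left (hcauchy hτ hq hw) (abs_nonneg η)
  have hqq : |κ * l2Inner 0 L (fun _ ↦ τ) q q| = |κ| * l2Norm 0 L (fun _ ↦ τ) q ^ 2 := by
    rw [abs_mul, ← l2Norm_sq hL fun _ _ ↦ hτ, abs_sq]
  rw [← abs_mul] at hqw
  rw [← abs_sq (l2Norm 0 L 1 θ), ← abs_mul, l2Norm_sq (ρ := 1) hL fun _ _ ↦ zero_le_one,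
    h.temperature_eq_pairing hL hQ hQ' hQ₀ hQL, ← hqq]
  refine (abs_add_le _ _).trans (add_le_add ((abs_add_le _ _).trans (add_le_add_left ?_ _)) hqw)
  exact (abs_sub _ _).trans (add_le_add ((abs_sub _ _).trans (add_le_add hQq hQf₄)) hqΦ)

lemma exists_l2Norm_temperature_le (hL : 0 ≤ L) (hβ : 0 < β) (hκ : κ ≠ 0) (hτ : 0 ≤ τ)
    (hδ : ContinuousOn δ (Icc 0 L)) (hm₀ : ∀ x ∈ Icc 0 L, 0 ≤ m x)
    (hδ₀ : ∀ x ∈ Icc 0 L, 0 < δ x) (hp₀ : ∀ x ∈ Icc 0 L, 0 ≤ p x) :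
    ∃ C ≥ 0, ∀ (lam : ℝ) (f₁ f₂ f₃ f₄ u w θ q : ℝ → ℂ),
      ResolventSol L η β κ τ m δ p lam f₁ f₂ f₃ f₄ u w θ q → ∫ x in (0 : ℝ)..L, θ x = 0 →
        l2Norm 0 L 1 θ ≤ C * controlNorm L β τ m δ p w q f₁ f₂ f₃ f₄ := by
  have hpoincare (c : ℝ) := exists_l2Norm_le_mul_l2Norm_deriv (E := ℂ) (ρ := fun _ ↦ c) (σ := 1)
    hL continuousOn_const continuousOn_const fun _ _ ↦ zero_lt_one
  obtain ⟨c₁, hc₁, hβ_deriv⟩ := hpoincare β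
  obtain ⟨c₂, hc₂, hτ_deriv⟩ := hpoincare τ
  obtain ⟨c₃, hc₃, hτβ⟩ := exists_l2Norm_le_mul_l2Norm (E := ℂ) (ρ := fun _ ↦ τ)
    (σ := fun _ ↦ β) hL continuousOn_const continuousOn_const fun _ _ ↦ hβ
  obtain ⟨c₄, hc₄, hτδ⟩ := exists_l2Norm_le_mul_l2Norm_deriv (E := ℂ) (ρ := fun _ ↦ τ) hL
    continuousOn_const hδ hδ₀
  obtain ⟨C, hC, habsorb⟩ := exists_pos_le_mul_of_mul_sq_le (abs_pos.2 hκ) (add_nonneg hc₁ hc₂)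
    (by positivity : 0 ≤ c₃ * c₂ + |κ| * c₃ ^ 2 + |η| * (c₃ * c₄))
  refine ⟨C, hC.le, fun lam f₁ f₂ f₃ f₄ u w θ q h hθ₀ ↦ habsorb _ _ (Real.sqrt_nonneg _) ?_⟩
  obtain ⟨-, hw, hθ, hq, -⟩ := h.contDiff_one
  obtain ⟨Q, hQ, hQ', hQ₀, hQL⟩ := exists_contDiff_deriv_eq hθ.continuous hθ₀
  obtain ⟨hwN, hqN, -, -, hf₃N, hf₄N⟩ := l2Norm_le_controlNorm (w := w) (q := q) (f₁ := f₁)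
    (f₂ := f₂) (f₃ := f₃) (f₄ := f₄) hL hτ hm₀ hp₀ hβ.le fun x hx ↦ (hδ₀ x hx).le
  have hQβ := hQ' ▸ hβ_deriv Q hQ hQ₀
  have hQτ := hQ' ▸ hτ_deriv Q hQ hQ₀
  set T := l2Norm 0 L 1 θ
  set N := controlNorm L β τ m δ p w q f₁ f₂ f₃ f₄
  have hT : 0 ≤ T := l2Norm_nonneg
  have hN : 0 ≤ N := Real.sqrt_nonneg _
  have hΦτ : l2Norm 0 L (fun _ ↦ τ) (fluxPotential η κ lam w q Q) ≤ c₂ * N :=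
    (hτ_deriv _ (h.contDiff_fluxPotential hQ) (h.fluxPotential_zero hQ₀)).trans <| by
      rw [l2Norm_congr hL (h.eqOn_deriv_fluxPotential hQ hQ')]
      gcongr
  have hqτ : l2Norm 0 L (fun _ ↦ τ) q ≤ c₃ * N := (hτβ q hq.continuous.continuousOn).trans <| by
    gcongr
  have hwτ : l2Norm 0 L (fun _ ↦ τ) w ≤ c₄ * N :=
    (hτδ w hw h.boundary_eq_zero.2.2.1).trans <| by gcongr
  calc |κ| * T ^ 2 ≤ _ := h.abs_mul_l2Norm_temperature_sq_le hL hβ.le hτ hQ hQ' hQ₀ hQL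
    _ ≤ c₁ * T * N + c₂ * T * N + c₃ * N * (c₂ * N) + |κ| * (c₃ * N) ^ 2
        + |η| * (c₃ * N * (c₄ * N)) := by
      gcongr <;> exact l2Norm_nonneg
    _ = (c₁ + c₂) * T * N + (c₃ * c₂ + |κ| * c₃ ^ 2 + |η| * (c₃ * c₄)) * N ^ 2 := by ring

lemma l2Norm_strain_sq_le (h : ResolventSol L η β κ τ m δ p lam f₁ f₂ f₃ f₄ u w θ q)
    (hL : 0 ≤ L) (hm : ContinuousOn m (Icc 0 L))
    (hδ : AbsolutelyContinuousOnInterval δ 0 L) (hp : AbsolutelyContinuousOnInterval p 0 L)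
    (hm₀ : ∀ x ∈ Icc 0 L, 0 ≤ m x) (hδ₀ : ∀ x ∈ Icc 0 L, 0 ≤ δ x)
    (hp₀ : ∀ x ∈ Icc 0 L, 0 ≤ p x) :
    l2Norm 0 L p (deriv u) ^ 2 ≤ l2Norm 0 L m w ^ 2 + l2Norm 0 L m w * l2Norm 0 L m f₁
      + |η| * (l2Norm 0 L 1 θ * l2Norm 0 L 1 (deriv u)) + l2Norm 0 L m f₂ * l2Norm 0 L m u
      + 2 * (l2Norm 0 L δ (deriv w) * l2Norm 0 L δ (deriv u)) := by
  obtain ⟨hu, hw, hθ, -, hf₁, hf₂, -⟩ := h.contDiff_one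
  have hcauchy {ρ : ℝ → ℝ} (hρ : ContinuousOn ρ (Icc 0 L)) (hρ₀ : ∀ x ∈ Icc 0 L, 0 ≤ ρ x)
      {f g : ℝ → ℂ} (hf : Continuous f) (hg : Continuous g) :
      |l2Inner 0 L ρ f g| ≤ l2Norm 0 L ρ f * l2Norm 0 L ρ g :=
    abs_l2Inner_le hL hρ hf.continuousOn hg.continuousOn hρ₀
  have hwf₁ := le_of_abs_le (hcauchy hm hm₀ hw.continuous hf₁.continuous)
  have hf₂u := le_of_abs_le (hcauchy hm hm₀ hf₂.continuous hu.continuous)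
  have hwu := neg_le_of_abs_le (hcauchy (uIcc_of_le hL ▸ hδ.continuousOn) hδ₀
    hw.continuous_deriv_one hu.continuous_deriv_one)
  have hθu : η * l2Inner 0 L 1 θ (deriv u)
      ≤ |η| * (l2Norm 0 L 1 θ * l2Norm 0 L 1 (deriv u)) := by
    refine le_of_abs_le ?_
    rw [abs_mul]
    exact mul_le_mul_of_nonneg_left (hcauchy continuousOn_const (fun _ _ ↦ zero_le_one)
      hθ.continuous hu.continuous_deriv_one) (abs_nonneg η)
  rw [l2Norm_sq hL hp₀, l2Norm_sq hL hm₀, h.strain_eq_pairing hL hm hδ hp]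
  linarith

lemma exists_l2Norm_strain_le (hL : 0 < L) (hβ : 0 ≤ β) (hτ : 0 ≤ τ)
    (hm : ContinuousOn m (Icc 0 L)) (hδ : AbsolutelyContinuousOnInterval δ 0 L)
    (hp : AbsolutelyContinuousOnInterval p 0 L)
    (hm₀ : ∀ x ∈ Icc 0 L, 0 ≤ m x) (hδ₀ : ∀ x ∈ Icc 0 L, 0 < δ x)
    (hp₀ : ∀ x ∈ Icc 0 L, 0 < p x) {c : ℝ} (hc : 0 ≤ c) :
    ∃ C ≥ 0, ∀ (lam : ℝ) (f₁ f₂ f₃ f₄ u w θ q : ℝ → ℂ),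
      ResolventSol L η β κ τ m δ p lam f₁ f₂ f₃ f₄ u w θ q →
        l2Norm 0 L 1 θ ≤ c * controlNorm L β τ m δ p w q f₁ f₂ f₃ f₄ →
          l2Norm 0 L p (deriv u) ≤ C * controlNorm L β τ m δ p w q f₁ f₂ f₃ f₄ := by
  have hδ' : ContinuousOn δ (Icc 0 L) := uIcc_of_le hL.le ▸ hδ.continuousOn
  have hp' : ContinuousOn p (Icc 0 L) := uIcc_of_le hL.le ▸ hp.continuousOn
  obtain ⟨c₁, hc₁, hmδ⟩ := exists_l2Norm_le_mul_l2Norm_deriv (E := ℂ) hL.le hm hδ' hδ₀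
  obtain ⟨c₂, hc₂, hmp⟩ := exists_l2Norm_le_mul_l2Norm_deriv (E := ℂ) hL.le hm hp' hp₀
  obtain ⟨c₃, hc₃, hone_p⟩ := exists_l2Norm_le_mul_l2Norm (E := ℂ) (ρ := 1) hL.le
    continuousOn_const hp' hp₀
  obtain ⟨c₄, hc₄, hδp⟩ := exists_l2Norm_le_mul_l2Norm (E := ℂ) hL.le hδ' hp' hp₀
  obtain ⟨C, hC, habsorb⟩ := exists_pos_le_mul_of_mul_sq_le zero_lt_one
    (by positivity : 0 ≤ |η| * (c * c₃) + c₂ + 2 * c₄) (by positivity : 0 ≤ c₁ ^ 2 + c₁ * c₂)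
  refine ⟨C, hC.le, fun lam f₁ f₂ f₃ f₄ u w θ q h hθN ↦ habsorb _ _ (Real.sqrt_nonneg _) ?_⟩
  obtain ⟨hu, hw, -, -, hf₁, -⟩ := h.contDiff_one
  obtain ⟨hu₀, -, hw₀, -⟩ := h.boundary_eq_zero
  obtain ⟨hwN, -, hf₁N, hf₂N, -⟩ := l2Norm_le_controlNorm (w := w) (q := q) (f₁ := f₁)
    (f₂ := f₂) (f₃ := f₃) (f₄ := f₄) hL.le hτ hm₀ (fun x hx ↦ (hp₀ x hx).le) hβ
    fun x hx ↦ (hδ₀ x hx).le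
  set S := l2Norm 0 L p (deriv u)
  set N := controlNorm L β τ m δ p w q f₁ f₂ f₃ f₄
  have hN : 0 ≤ N := Real.sqrt_nonneg _
  have hwm : l2Norm 0 L m w ≤ c₁ * N := (hmδ w hw hw₀).trans <| by gcongr
  have hf₁m : l2Norm 0 L m f₁ ≤ c₂ * N := (hmp f₁ hf₁ (h.f₁_zero hL)).trans <| by gcongr
  have hum : l2Norm 0 L m u ≤ c₂ * S := hmp u hu hu₀
  have hu1 : l2Norm 0 L 1 (deriv u) ≤ c₃ * S := hone_p _ hu.continuous_deriv_one.continuousOn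
  have huδ : l2Norm 0 L δ (deriv u) ≤ c₄ * S := hδp _ hu.continuous_deriv_one.continuousOn
  calc 1 * S ^ 2 = S ^ 2 := one_mul _
    _ ≤ _ := h.l2Norm_strain_sq_le hL.le hm hδ hp hm₀ (fun x hx ↦ (hδ₀ x hx).le)
      fun x hx ↦ (hp₀ x hx).le
    _ ≤ (c₁ * N) ^ 2 + c₁ * N * (c₂ * N) + |η| * (c * N * (c₃ * S)) + N * (c₂ * S)
        + 2 * (N * (c₄ * S)) := by
      gcongr <;> exact l2Norm_nonneg
    _ = (|η| * (c * c₃) + c₂ + 2 * c₄) * S * N + (c₁ ^ 2 + c₁ * c₂) * N ^ 2 := by ring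

lemma exists_normUsq_le (hL : 0 < L) (hβ : 0 < β) (hκ : κ ≠ 0) (hτ : 0 ≤ τ)
    (hm : ContinuousOn m (Icc 0 L)) (hδ : AbsolutelyContinuousOnInterval δ 0 L)
    (hp : AbsolutelyContinuousOnInterval p 0 L) (hm₀ : ∀ x ∈ Icc 0 L, 0 ≤ m x)
    (hδ₀ : ∀ x ∈ Icc 0 L, 0 < δ x) (hp₀ : ∀ x ∈ Icc 0 L, 0 < p x) :
    ∃ K ≥ 0, ∀ (lam : ℝ) (f₁ f₂ f₃ f₄ u w θ q : ℝ → ℂ),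
      ResolventSol L η β κ τ m δ p lam f₁ f₂ f₃ f₄ u w θ q → ∫ x in (0 : ℝ)..L, θ x = 0 →
        normUsq L τ m p u w θ q
          ≤ K * (dissipation L β δ w q + normFsq L τ m p f₁ f₂ f₃ f₄) := by
  have hδ' : ContinuousOn δ (Icc 0 L) := uIcc_of_le hL.le ▸ hδ.continuousOn
  have hδ₀' x hx := (hδ₀ x hx).le
  have hp₀' x hx := (hp₀ x hx).le
  obtain ⟨cθ, hcθ, htemperature⟩ :=
    exists_l2Norm_temperature_le (η := η) hL.le hβ hκ hτ hδ' hm₀ hδ₀ hp₀'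
  obtain ⟨cu, -, hstrain⟩ :=
    exists_l2Norm_strain_le (η := η) (κ := κ) hL hβ.le hτ hm hδ hp hm₀ hδ₀ hp₀ hcθ
  obtain ⟨cw, hcw, hvelocity⟩ := exists_l2Norm_le_mul_l2Norm_deriv (E := ℂ) hL.le hm hδ' hδ₀
  obtain ⟨cq, hcq, hflux⟩ := exists_l2Norm_le_mul_l2Norm (E := ℂ) (ρ := fun _ ↦ τ)
    (σ := fun _ ↦ β) hL.le continuousOn_const continuousOn_const fun _ _ ↦ hβ
  refine ⟨cu ^ 2 + cw ^ 2 + cθ ^ 2 + cq ^ 2, by positivity,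
    fun lam f₁ f₂ f₃ f₄ u w θ q h hθ₀ ↦ ?_⟩
  obtain ⟨-, hw, -, hq, -⟩ := h.contDiff_one
  obtain ⟨hwN, hqN, -⟩ := l2Norm_le_controlNorm (w := w) (q := q) (f₁ := f₁) (f₂ := f₂)
    (f₃ := f₃) (f₄ := f₄) hL.le hτ hm₀ hp₀' hβ.le hδ₀'
  have hθN := htemperature lam f₁ f₂ f₃ f₄ u w θ q h hθ₀
  have huN := hstrain lam f₁ f₂ f₃ f₄ u w θ q h hθN
  rw [normUsq_eq_l2Norm_sq hL.le hτ hm₀ hp₀', ← controlNorm_sq hL.le hτ hm₀ hp₀' hβ.le hδ₀']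
  set N := controlNorm L β τ m δ p w q f₁ f₂ f₃ f₄
  have hwmN : l2Norm 0 L m w ≤ cw * N :=
    (hvelocity w hw h.boundary_eq_zero.2.2.1).trans <| by gcongr
  have hqτN : l2Norm 0 L (fun _ ↦ τ) q ≤ cq * N :=
    (hflux q hq.continuous.continuousOn).trans <| by gcongr
  calc _ ≤ (cu * N) ^ 2 + (cw * N) ^ 2 + (cθ * N) ^ 2 + (cq * N) ^ 2 := by
        gcongr <;> exact l2Norm_nonneg
    _ = (cu ^ 2 + cw ^ 2 + cθ ^ 2 + cq ^ 2) * N ^ 2 := by ring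

end ResolventSol

theorem uniform_resolvent_bound_general (L η β κ τ : ℝ) (hL : 0 < L) (hβ : 0 < β) (hκ : κ ≠ 0)
    (hτ : 0 ≤ τ) (m δ p : ℝ → ℝ) (hm : ContinuousOn m (Icc 0 L))
    (hδ : AbsolutelyContinuousOnInterval δ 0 L) (hp : AbsolutelyContinuousOnInterval p 0 L)
    (hm₀ : ∀ x ∈ Icc 0 L, 0 ≤ m x) (hδ₀ : ∀ x ∈ Icc 0 L, 0 < δ x)
    (hp₀ : ∀ x ∈ Icc 0 L, 0 < p x) :
    ∃ C > 0, ∀ (lam : ℝ) (f₁ f₂ f₃ f₄ u w θ q : ℝ → ℂ),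
      ResolventSol L η β κ τ m δ p lam f₁ f₂ f₃ f₄ u w θ q → ∫ x in (0 : ℝ)..L, θ x = 0 →
        √(normUsq L τ m p u w θ q) ≤ C * √(normFsq L τ m p f₁ f₂ f₃ f₄) := by
  obtain ⟨K, hK, henergy⟩ :=
    ResolventSol.exists_normUsq_le (η := η) hL hβ hκ hτ hm hδ hp hm₀ hδ₀ hp₀
  obtain ⟨C, hC, habsorb⟩ := exists_pos_le_mul_of_mul_sq_le zero_lt_one hK hK
  refine ⟨C, hC, fun lam f₁ f₂ f₃ f₄ u w θ q h hθ₀ ↦ habsorb _ _ (Real.sqrt_nonneg _) ?_⟩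
  have hp₀' x hx := (hp₀ x hx).le
  have hdissipation := h.dissipation_le hL.le hτ hm hδ hp hm₀ hp₀'
  have hF : √(normFsq L τ m p f₁ f₂ f₃ f₄) ^ 2 = normFsq L τ m p f₁ f₂ f₃ f₄ :=
    Real.sq_sqrt (normUsq_nonneg hL.le hτ hm₀ hp₀')
  calc 1 * √(normUsq L τ m p u w θ q) ^ 2 = normUsq L τ m p u w θ q := by
        rw [one_mul, Real.sq_sqrt (normUsq_nonneg hL.le hτ hm₀ hp₀')]
    _ ≤ K * (dissipation L β δ w q + normFsq L τ m p f₁ f₂ f₃ f₄) :=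
        henergy lam f₁ f₂ f₃ f₄ u w θ q h hθ₀
    _ ≤ K * (√(normUsq L τ m p u w θ q) * √(normFsq L τ m p f₁ f₂ f₃ f₄)
          + √(normFsq L τ m p f₁ f₂ f₃ f₄) ^ 2) := by
        rw [hF]
        gcongr
    _ = K * √(normUsq L τ m p u w θ q) * √(normFsq L τ m p f₁ f₂ f₃ f₄)
          + K * √(normFsq L τ m p f₁ f₂ f₃ f₄) ^ 2 := by ring

/-- Uniform resolvent bound on the imaginary axis. -/
theorem uniform_resolvent_bound
    (L η β κ τ : ℝ) (hL : 0 < L) (hη : 0 < η) (hβ : 0 < β) (hκ : 0 < κ) (hτ : 0 < τ)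
    (m δ p : ℝ → ℝ)
    (hmLip : ∃ K, LipschitzOnWith K m (Icc 0 L))
    (hδLip : ∃ K, LipschitzOnWith K δ (Icc 0 L))
    (hpLip : ∃ K, LipschitzOnWith K p (Icc 0 L))
    (hmpos : ∀ x ∈ Icc (0 : ℝ) L, 0 < m x)
    (hδpos : ∀ x ∈ Icc (0 : ℝ) L, 0 < δ x)
    (hppos : ∀ x ∈ Icc (0 : ℝ) L, 0 < p x)
    :
    ∃ C > (0 : ℝ),
      ∀ (lam : ℝ) (f₁ f₂ f₃ f₄ u w θ q : ℝ → ℂ),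
        ResolventSol L η β κ τ m δ p lam f₁ f₂ f₃ f₄ u w θ q →
          (∫ x in (0 : ℝ)..L, θ x) = 0 →
            Real.sqrt (normUsq L τ m p u w θ q)
              ≤ C * Real.sqrt (normFsq L τ m p f₁ f₂ f₃ f₄) := by
  obtain ⟨⟨_, hm⟩, ⟨_, hδ⟩, _, hp⟩ := hmLip, hδLip, hpLip
  rw [← uIcc_of_le hL.le] at hδ hp
  exact uniform_resolvent_bound_general L η β κ τ hL hβ hκ.ne' hτ.le m δ p hm.continuousOn
    hδ.absolutelyContinuousOnInterval hp.absolutelyContinuousOnInterval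
    (fun x hx ↦ (hmpos x hx).le) hδpos hppos
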